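/- There exist a real number α > 0 and a natural number k₀ such that for every a ∈ ℝ² lying on the boundary of the first quadrant or the boundary of the third quadrant (i.e., a ∈ ℝ² with a₁ ≥ 0, a₂ ≥ 0 and a₁·a₂ = 0, or a₁ ≤ 0, a₂ ≤ 0 and a₁·a₂ = 0), and every integer k ≥ k₀, N_k(Σ₁, a) ≤ α·k², where Σ₁ = {A₁, A₂}. -/

import Mathlib

open Matrix Set

noncomputable section

/-- `XSeq S a k` is the set of all vectors `T_{k-1} ⋯ T_0 · a` with each `T_j ∈ S`
(and `XSeq S a 0 = {a}`). -/
def XSeq {n : ℕ} (S : Set (Matrix (Fin n) (Fin n) ℝ)) (a : Fin n → ℝ) : ℕ → Set (Fin n → ℝ)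
  | 0 => {a}
  | k + 1 => ⋃ A ∈ S, A.mulVec '' XSeq S a k

/-- `PHull S a k` is the convex hull of `XSeq S a k`. -/
def PHull {n : ℕ} (S : Set (Matrix (Fin n) (Fin n) ℝ)) (a : Fin n → ℝ) (k : ℕ) :
    Set (Fin n → ℝ) :=
  convexHull ℝ (XSeq S a k)

/-- `EPts S a k` is the set of extreme points of `PHull S a k`. -/
def EPts {n : ℕ} (S : Set (Matrix (Fin n) (Fin n) ℝ)) (a : Fin n → ℝ) (k : ℕ) :
    Set (Fin n → ℝ) :=
  Set.extremePoints ℝ (PHull S a k)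

/-- `NExt S a k` is the number of extreme points of `PHull S a k`. -/
def NExt {n : ℕ} (S : Set (Matrix (Fin n) (Fin n) ℝ)) (a : Fin n → ℝ) (k : ℕ) : ℕ :=
  (EPts S a k).ncard

def M1 : Matrix (Fin 2) (Fin 2) ℝ := !![0, 1; 1, 0]
def M2 : Matrix (Fin 2) (Fin 2) ℝ := !![1, 1; 0, 1]
def M3 : Matrix (Fin 2) (Fin 2) ℝ := !![1, 0; 1, 1]
def M4 : Matrix (Fin 2) (Fin 2) ℝ := !![1, 1; 1, 0]
def M5 : Matrix (Fin 2) (Fin 2) ℝ := !![0, 1; 1, 1]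

/-- Points of `X` that are the unique maximiser over `X` of some functional `(u, v)` with
`R u v`. -/
def Mx (X : Set (Fin 2 → ℝ)) (R : ℝ → ℝ → Prop) : Set (Fin 2 → ℝ) :=
  {x | x ∈ X ∧ ∃ u v : ℝ, R u v ∧ ∀ y ∈ X, y ≠ x → u * y 0 + v * y 1 < u * x 0 + v * x 1}

lemma M1_mul (x : Fin 2 → ℝ) : M1.mulVec x = ![x 1, x 0] := by
  ext i; fin_cases i <;> simp [M1, Matrix.mulVec, dotProduct, Fin.sum_univ_two]

lemma M2_mul (x : Fin 2 → ℝ) : M2.mulVec x = ![x 0 + x 1, x 1] := by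
  ext i; fin_cases i <;> simp [M2, Matrix.mulVec, dotProduct, Fin.sum_univ_two]

abbrev XX (a : Fin 2 → ℝ) (k : ℕ) : Set (Fin 2 → ℝ) := XSeq {M1, M2} a k

lemma XX_succ (a : Fin 2 → ℝ) (k : ℕ) :
    XX a (k + 1) = M1.mulVec '' XX a k ∪ M2.mulVec '' XX a k := by
  simp [XX, XSeq]

lemma XX_M1 {a x : Fin 2 → ℝ} {k : ℕ} (h : x ∈ XX a k) : ![x 1, x 0] ∈ XX a (k + 1) := by
  rw [XX_succ]; exact Or.inl ⟨x, h, M1_mul x⟩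

lemma XX_M2 {a x : Fin 2 → ℝ} {k : ℕ} (h : x ∈ XX a k) : ![x 0 + x 1, x 1] ∈ XX a (k + 1) := by
  rw [XX_succ]; exact Or.inr ⟨x, h, M2_mul x⟩

lemma XX_cases {a x : Fin 2 → ℝ} {k : ℕ} (h : x ∈ XX a (k + 1)) :
    ∃ y ∈ XX a k, x = ![y 1, y 0] ∨ x = ![y 0 + y 1, y 1] := by
  rw [XX_succ] at h
  rcases h with ⟨y, hy, rfl⟩ | ⟨y, hy, rfl⟩
  · exact ⟨y, hy, Or.inl (M1_mul y)⟩
  · exact ⟨y, hy, Or.inr (M2_mul y)⟩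

lemma XX_finite (a : Fin 2 → ℝ) (k : ℕ) : (XX a k).Finite := by
  induction k with
  | zero => simp [XX, XSeq]
  | succ k ih => rw [XX_succ]; exact (ih.image _).union (ih.image _)

lemma Mx_finite (a : Fin 2 → ℝ) (k : ℕ) (R : ℝ → ℝ → Prop) : (Mx (XX a k) R).Finite :=
  (XX_finite a k).subset fun _ h => h.1

lemma XX_nonneg {a : Fin 2 → ℝ} (h0 : 0 ≤ a 0) (h1 : 0 ≤ a 1) (k : ℕ) :
    ∀ x ∈ XX a k, 0 ≤ x 0 ∧ 0 ≤ x 1 ∧ a 0 + a 1 ≤ x 0 + x 1 := by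
  induction k with
  | zero => intro x hx; simp [XX, XSeq] at hx; subst hx; exact ⟨h0, h1, le_rfl⟩
  | succ k ih =>
    intro x hx
    obtain ⟨y, hy, rfl | rfl⟩ := XX_cases hx <;> obtain ⟨p, q, r⟩ := ih y hy <;> simp
    · exact ⟨q, p, by linarith⟩
    · exact ⟨by linarith, q, by linarith⟩

/-- a weak competitor must be the unique maximiser itself -/
lemma eq_of_le {X : Set (Fin 2 → ℝ)} {x y : Fin 2 → ℝ} {u v : ℝ}
    (h : ∀ y ∈ X, y ≠ x → u * y 0 + v * y 1 < u * x 0 + v * x 1) (hy : y ∈ X)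
    (hle : u * x 0 + v * x 1 ≤ u * y 0 + v * y 1) : x = y := by
  by_contra hne
  exact absurd (h y hy (Ne.symm hne)) (not_lt.mpr hle)

lemma pull1 {a x : Fin 2 → ℝ} {k : ℕ} {u v : ℝ} {R : ℝ → ℝ → Prop} (hx : x ∈ XX a k)
    (h : ∀ y ∈ XX a (k + 1), y ≠ ![x 1, x 0] →
      u * y 0 + v * y 1 < u * (![x 1, x 0] : Fin 2 → ℝ) 0 + v * (![x 1, x 0] : Fin 2 → ℝ) 1)
    (hR : R v u) : ![x 1, x 0] ∈ M1.mulVec '' Mx (XX a k) R := by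
  refine ⟨x, ⟨hx, v, u, hR, fun y hy hne => ?_⟩, M1_mul x⟩
  have := h _ (XX_M1 hy) (by
    intro he
    apply hne
    have e0 := congrFun he 0
    have e1 := congrFun he 1
    simp at e0 e1
    ext i; fin_cases i <;> simp [e0, e1])
  simp at this
  linarith

lemma pull2 {a x : Fin 2 → ℝ} {k : ℕ} {u v : ℝ} {R : ℝ → ℝ → Prop} (hx : x ∈ XX a k)
    (h : ∀ y ∈ XX a (k + 1), y ≠ ![x 0 + x 1, x 1] →
      u * y 0 + v * y 1 <
        u * (![x 0 + x 1, x 1] : Fin 2 → ℝ) 0 + v * (![x 0 + x 1, x 1] : Fin 2 → ℝ) 1)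
    (hR : R u (u + v)) : ![x 0 + x 1, x 1] ∈ M2.mulVec '' Mx (XX a k) R := by
  refine ⟨x, ⟨hx, u, u + v, hR, fun y hy hne => ?_⟩, M2_mul x⟩
  have := h _ (XX_M2 hy) (by
    intro he
    apply hne
    have e0 := congrFun he 0
    have e1 := congrFun he 1
    simp at e0 e1
    rw [e1] at e0
    have e0' : y 0 = x 0 := by linarith
    ext i; fin_cases i <;> simp [e0', e1])
  simp at this
  linarith

abbrev Q1 (u v : ℝ) : Prop := 0 ≤ u ∧ 0 ≤ v
abbrev Q2 (u v : ℝ) : Prop := u ≤ 0 ∧ 0 ≤ v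
abbrev Q3 (u v : ℝ) : Prop := u ≤ 0 ∧ v ≤ 0
abbrev Q4 (u v : ℝ) : Prop := 0 ≤ u ∧ v ≤ 0
abbrev Ra (u v : ℝ) : Prop := 0 ≤ v ∧ v ≤ u
abbrev Rb (u v : ℝ) : Prop := 0 ≤ u ∧ u ≤ v ∧ v ≤ 2 * u
abbrev Rc (u v : ℝ) : Prop := 0 ≤ u ∧ 2 * u ≤ v

lemma Mx_zero (a : Fin 2 → ℝ) (R : ℝ → ℝ → Prop) : (Mx (XX a 0) R).ncard ≤ 1 := by
  have : Mx (XX a 0) R ⊆ {a} := fun x hx => hx.1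
  simpa using Set.ncard_le_ncard this

lemma Mx_one (a : Fin 2 → ℝ) (R : ℝ → ℝ → Prop) : (Mx (XX a 1) R).ncard ≤ 2 := by
  have : Mx (XX a 1) R ⊆ {![a 1, a 0], ![a 0 + a 1, a 1]} := fun x hx => by
    obtain ⟨y, hy, h⟩ := XX_cases hx.1
    simp [XX, XSeq] at hy
    subst hy
    exact h
  exact (Set.ncard_le_ncard this).trans (Set.ncard_insert_le _ _ |>.trans (by simp))

lemma inter_ab (X : Set (Fin 2 → ℝ)) {R S : ℝ → ℝ → Prop}
    (hRS : ∃ L : ℝ → ℝ → ℝ, (∀ p q, L (-p) (-q) = - L p q) ∧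
      ∀ u v u' v' p q : ℝ, R u v → S u' v' → 0 < u * p + v * q → 0 < u' * p + v' * q →
        0 < L p q) : (Mx X R ∩ Mx X S).ncard ≤ 1 := by
  obtain ⟨L, hL, H⟩ := hRS
  by_contra hc
  push Not at hc
  obtain ⟨x, ⟨hx, hx'⟩, y, ⟨hy, hy'⟩, hne⟩ :=
    (Set.one_lt_ncard (Set.finite_of_ncard_pos (by omega))).1 hc
  have gen : ∀ x y : Fin 2 → ℝ, x ∈ Mx X R → x ∈ Mx X S → y ∈ X → y ≠ x →
      0 < L (x 0 - y 0) (x 1 - y 1) := by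
    rintro x y ⟨-, u, v, hr, h⟩ ⟨-, u', v', hs, h'⟩ hyX hne
    apply H u v u' v' _ _ hr hs
    · linarith [h y hyX hne]
    · linarith [h' y hyX hne]
  have g1 := gen x y hx hx' hy.1 (Ne.symm hne)
  have g2 := gen y x hy hy' hx.1 hne
  have g3 := hL (x 0 - y 0) (x 1 - y 1)
  rw [neg_sub, neg_sub] at g3
  linarith

lemma Q1_step {a : Fin 2 → ℝ} (h0 : 0 ≤ a 0) (h1 : 0 ≤ a 1) (k : ℕ) :
    Mx (XX a (k + 1)) Q1 ⊆ M2.mulVec '' Mx (XX a k) Rb ∪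
      (M1.mulVec '' Mx (XX a k) Ra ∪ M2.mulVec '' Mx (XX a k) Rc) := by
  rintro x ⟨hx, u, v, ⟨hu, hv⟩, h⟩
  obtain ⟨y, hy, hxy⟩ := XX_cases hx
  obtain ⟨y0, y1, -⟩ := XX_nonneg h0 h1 k y hy
  rcases le_total v u with hvu | huv
  · left
    have : x = ![y 0 + y 1, y 1] := by
      rcases hxy with rfl | rfl
      · apply eq_of_le h (XX_M2 hy)
        simp
        nlinarith [mul_nonneg (sub_nonneg.2 hvu) y0, mul_nonneg hv y1]
      · rfl
    subst this
    exact pull2 hy h ⟨hu, by linarith, by linarith⟩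
  · right
    rcases hxy with rfl | rfl
    · left; exact pull1 hy h ⟨hu, huv⟩
    · right; exact pull2 hy h ⟨hu, by linarith⟩

lemma Q4_step {a : Fin 2 → ℝ} (h0 : 0 ≤ a 0) (h1 : 0 ≤ a 1) (k : ℕ) :
    Mx (XX a (k + 2)) Q4 ⊆ M2.mulVec '' Mx (XX a (k + 1)) Q1 ∪
      M2.mulVec '' Mx (XX a (k + 1)) Q4 := by
  rintro x ⟨hx, u, v, ⟨hu, hv⟩, h⟩
  obtain ⟨y, hy, hxy⟩ := XX_cases hx
  have : ∃ z ∈ XX a (k + 1), x = ![z 0 + z 1, z 1] := by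
    rcases hxy with rfl | rfl
    · obtain ⟨w, hw, hyw⟩ := XX_cases hy
      obtain ⟨w0, w1, -⟩ := XX_nonneg h0 h1 k w hw
      rcases hyw with rfl | rfl
      · refine ⟨_, XX_M2 hw, eq_of_le h (XX_M2 (XX_M2 hw)) ?_⟩
        simp
        nlinarith [mul_nonneg hu w1]
      · refine ⟨_, hy, eq_of_le h (XX_M2 hy) ?_⟩
        simp
        nlinarith [mul_nonneg hu w1, mul_nonneg hu w0, mul_nonneg (neg_nonneg.2 hv) w0]
    · exact ⟨y, hy, rfl⟩
  obtain ⟨z, hz, rfl⟩ := this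
  rcases le_total 0 (u + v) with hs | hs
  · left; exact pull2 hz h ⟨hu, hs⟩
  · right; exact pull2 hz h ⟨hu, hs⟩

lemma Q2_step {a : Fin 2 → ℝ} (h0 : 0 ≤ a 0) (h1 : 0 ≤ a 1) (k : ℕ) :
    Mx (XX a (k + 2)) Q2 ⊆ M1.mulVec '' Mx (XX a (k + 1)) Q4 := by
  rintro x ⟨hx, u, v, ⟨hu, hv⟩, h⟩
  obtain ⟨y, hy, hxy⟩ := XX_cases hx
  have : ∃ z ∈ XX a (k + 1), x = ![z 1, z 0] := by
    rcases hxy with rfl | rfl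
    · exact ⟨y, hy, rfl⟩
    · obtain ⟨w, hw, hyw⟩ := XX_cases hy
      obtain ⟨w0, w1, -⟩ := XX_nonneg h0 h1 k w hw
      rcases hyw with rfl | rfl
      · refine ⟨_, XX_M2 hw, eq_of_le h (XX_M1 (XX_M2 hw)) ?_⟩
        simp
        nlinarith [mul_nonneg hv w1, mul_nonneg (neg_nonneg.2 hu) w0]
      · refine ⟨_, hy, eq_of_le h (XX_M1 hy) ?_⟩
        simp
        nlinarith [mul_nonneg hv w0, mul_nonneg (neg_nonneg.2 hu) w0,
          mul_nonneg (neg_nonneg.2 hu) w1]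
  obtain ⟨z, hz, rfl⟩ := this
  exact pull1 hz h ⟨hv, hu⟩

lemma Q1_card {a : Fin 2 → ℝ} (h0 : 0 ≤ a 0) (h1 : 0 ≤ a 1) (k : ℕ) :
    (Mx (XX a k) Q1).ncard ≤ 2 * k + 1 := by
  induction k with
  | zero => exact Mx_zero a _
  | succ k ih =>
    have fin := Mx_finite a k
    set A := Mx (XX a k) Ra
    set B := Mx (XX a k) Rb
    set C := Mx (XX a k) Rc
    have e1 : (Mx (XX a (k + 1)) Q1).ncard ≤ B.ncard + (A.ncard + C.ncard) := by
      refine (Set.ncard_le_ncard (Q1_step h0 h1 k)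
        (((fin _).image _).union (((fin _).image _).union ((fin _).image _)))).trans ?_
      refine (Set.ncard_union_le _ _).trans (add_le_add (Set.ncard_image_le (fin _)) ?_)
      exact (Set.ncard_union_le _ _).trans
        (add_le_add (Set.ncard_image_le (fin _)) (Set.ncard_image_le (fin _)))
    have e2 : (B ∩ C).ncard ≤ 1 := by
      apply inter_ab
      refine ⟨fun p q => p + 2 * q, fun p q => by ring, ?_⟩
      rintro u v u' v' p q ⟨a1, a2, a3⟩ ⟨b1, b2⟩ h h'
      by_contra hn
      push Not at hn
      have hp : 0 < p := by
        by_contra hp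
        nlinarith [mul_nonneg (sub_nonneg.2 a3) (neg_nonneg.2 (not_lt.1 hp)),
          mul_nonneg (a1.trans a2) (neg_nonneg.2 hn)]
      have hq : 0 < q := by
        by_contra hq
        nlinarith [mul_nonneg (sub_nonneg.2 b2) (neg_nonneg.2 (not_lt.1 hq)),
          mul_nonneg b1 (neg_nonneg.2 hn)]
      linarith
    have e3 : (A ∩ (B ∪ C)).ncard ≤ 1 := by
      have : A ∩ (B ∪ C) ⊆ Mx (XX a k) Ra ∩ Mx (XX a k) (fun u v => 0 ≤ u ∧ u ≤ v) := by
        rintro x ⟨hx, ⟨hX, u, v, ⟨s1, s2, s3⟩, h⟩ | ⟨hX, u, v, ⟨s1, s2⟩, h⟩⟩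
        · exact ⟨hx, hX, u, v, ⟨s1, s2⟩, h⟩
        · exact ⟨hx, hX, u, v, ⟨s1, by linarith⟩, h⟩
      refine (Set.ncard_le_ncard this ((fin _).inter_of_left _)).trans ?_
      apply inter_ab
      refine ⟨fun p q => p + q, fun p q => by ring, ?_⟩
      rintro u v u' v' p q ⟨a1, a2⟩ ⟨b1, b2⟩ h h'
      by_contra hn
      push Not at hn
      have hp : 0 < p := by
        by_contra hp
        nlinarith [mul_nonneg (sub_nonneg.2 a2) (neg_nonneg.2 (not_lt.1 hp)),
          mul_nonneg a1 (neg_nonneg.2 hn)]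
      have hq : 0 < q := by
        by_contra hq
        nlinarith [mul_nonneg (sub_nonneg.2 b2) (neg_nonneg.2 (not_lt.1 hq)),
          mul_nonneg b1 (neg_nonneg.2 hn)]
      linarith
    have e4 : (A ∪ (B ∪ C)).ncard ≤ (Mx (XX a k) Q1).ncard := by
      refine Set.ncard_le_ncard ?_ (fin _)
      rintro x (⟨hX, u, v, ⟨s1, s2⟩, h⟩ | ⟨hX, u, v, ⟨s1, s2, s3⟩, h⟩ | ⟨hX, u, v, ⟨s1, s2⟩, h⟩)
      · exact ⟨hX, u, v, ⟨by linarith, by linarith⟩, h⟩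
      · exact ⟨hX, u, v, ⟨by linarith, by linarith⟩, h⟩
      · exact ⟨hX, u, v, ⟨by linarith, by linarith⟩, h⟩
    have e5 := Set.ncard_union_add_ncard_inter A (B ∪ C) (fin _) ((fin _).union (fin _))
    have e6 := Set.ncard_union_add_ncard_inter B C (fin _) (fin _)
    omega

lemma Q4_card {a : Fin 2 → ℝ} (h0 : 0 ≤ a 0) (h1 : 0 ≤ a 1) (k : ℕ) :
    (Mx (XX a k) Q4).ncard ≤ k ^ 2 + 1 := by
  induction k with
  | zero => exact Mx_zero a _
  | succ k ih =>
    rcases k with _ | k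
    · exact Mx_one a _
    · have fin := Mx_finite a (k + 1)
      have e : (Mx (XX a (k + 2)) Q4).ncard ≤
          (Mx (XX a (k + 1)) Q1).ncard + (Mx (XX a (k + 1)) Q4).ncard := by
        refine (Set.ncard_le_ncard (Q4_step h0 h1 k)
          (((fin _).image _).union ((fin _).image _))).trans ?_
        exact (Set.ncard_union_le _ _).trans
          (add_le_add (Set.ncard_image_le (fin _)) (Set.ncard_image_le (fin _)))
      have := Q1_card h0 h1 (k + 1)
      nlinarith

lemma XX_e {a : Fin 2 → ℝ} (hz : a 0 * a 1 = 0) (k : ℕ) :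
    ![a 0 + a 1, 0] ∈ XX a (k + 1) := by
  induction k with
  | zero =>
    have ha : a ∈ XX a 0 := by simp [XX, XSeq]
    rcases mul_eq_zero.1 hz with h | h
    · have := XX_M1 ha
      simpa [h] using this
    · have := XX_M2 ha
      simpa [h] using this
  | succ k ih =>
    have := XX_M2 ih
    simpa using this

lemma Q3_card {a : Fin 2 → ℝ} (h0 : 0 ≤ a 0) (h1 : 0 ≤ a 1) (hz : a 0 * a 1 = 0) (k : ℕ) :
    (Mx (XX a (k + 2)) Q3).ncard ≤ 2 := by
  have : Mx (XX a (k + 2)) Q3 ⊆ {![a 0 + a 1, 0], ![0, a 0 + a 1]} := by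
    rintro x ⟨hx, u, v, ⟨hu, hv⟩, h⟩
    obtain ⟨x0, x1, hs⟩ := XX_nonneg h0 h1 _ x hx
    have p := XX_e hz (k + 1)
    have q := XX_M1 (XX_e hz k)
    simp at q
    rcases le_total v u with hvu | hvu
    · left
      apply eq_of_le h p
      simp
      nlinarith [mul_nonneg (neg_nonneg.2 hu) (sub_nonneg.2 hs),
        mul_nonneg (sub_nonneg.2 hvu) x1]
    · right
      apply eq_of_le h q
      simp
      nlinarith [mul_nonneg (neg_nonneg.2 hv) (sub_nonneg.2 hs),
        mul_nonneg (sub_nonneg.2 hvu) x0]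
  exact (Set.ncard_le_ncard this).trans (Set.ncard_insert_le _ _ |>.trans (by simp))

lemma all_card {a : Fin 2 → ℝ} (h0 : 0 ≤ a 0) (h1 : 0 ≤ a 1) (hz : a 0 * a 1 = 0) (k : ℕ) :
    (Mx (XX a (k + 2)) (fun _ _ => True)).ncard ≤ 10 * (k + 2) ^ 2 := by
  have fin := Mx_finite a (k + 2)
  have sub : Mx (XX a (k + 2)) (fun _ _ => True) ⊆
      (Mx (XX a (k + 2)) Q1 ∪ Mx (XX a (k + 2)) Q2) ∪
      (Mx (XX a (k + 2)) Q3 ∪ Mx (XX a (k + 2)) Q4) := by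
    rintro x ⟨hx, u, v, -, h⟩
    rcases le_total 0 u with hu | hu <;> rcases le_total 0 v with hv | hv
    · exact Or.inl (Or.inl ⟨hx, u, v, ⟨hu, hv⟩, h⟩)
    · exact Or.inr (Or.inr ⟨hx, u, v, ⟨hu, hv⟩, h⟩)
    · exact Or.inl (Or.inr ⟨hx, u, v, ⟨hu, hv⟩, h⟩)
    · exact Or.inr (Or.inl ⟨hx, u, v, ⟨hu, hv⟩, h⟩)
  have e := Set.ncard_le_ncard sub (((fin _).union (fin _)).union ((fin _).union (fin _)))
  have e1 := Set.ncard_union_le (Mx (XX a (k + 2)) Q1 ∪ Mx (XX a (k + 2)) Q2)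
    (Mx (XX a (k + 2)) Q3 ∪ Mx (XX a (k + 2)) Q4)
  have e2 := Set.ncard_union_le (Mx (XX a (k + 2)) Q1) (Mx (XX a (k + 2)) Q2)
  have e3 := Set.ncard_union_le (Mx (XX a (k + 2)) Q3) (Mx (XX a (k + 2)) Q4)
  have f1 := Q1_card h0 h1 (k + 2)
  have f2 : (Mx (XX a (k + 2)) Q2).ncard ≤ (k + 1) ^ 2 + 1 :=
    (Set.ncard_le_ncard (Q2_step h0 h1 k) ((Mx_finite a (k + 1) _).image _)).trans
      ((Set.ncard_image_le (Mx_finite a (k + 1) _)).trans (Q4_card h0 h1 (k + 1)))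
  have f3 := Q3_card h0 h1 hz k
  have f4 := Q4_card h0 h1 (k + 2)
  nlinarith

lemma extreme_sub {X : Set (Fin 2 → ℝ)} (hX : X.Finite) :
    Set.extremePoints ℝ (convexHull ℝ X) ⊆ Mx X (fun _ _ => True) := by
  intro x hx
  refine ⟨extremePoints_convexHull_subset hx, ?_⟩
  have hconv := ((convex_convexHull ℝ X).mem_extremePoints_iff_convex_sdiff.1 hx).2
  have hsub : convexHull ℝ (X \ {x}) ⊆ convexHull ℝ X \ {x} :=
    convexHull_min (fun y hy => ⟨subset_convexHull ℝ X hy.1, hy.2⟩) hconv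
  have hnot : x ∉ convexHull ℝ (X \ {x}) := fun h => (hsub h).2 rfl
  have hcl : IsClosed (convexHull ℝ (X \ {x})) :=
    (hX.subset Set.sdiff_subset).isClosed_convexHull ℝ
  obtain ⟨f, s, hf, hs⟩ := geometric_hahn_banach_closed_point (convex_convexHull ℝ _) hcl hnot
  have key : ∀ y : Fin 2 → ℝ, f y = f (Pi.single 0 1) * y 0 + f (Pi.single 1 1) * y 1 := by
    intro y
    have : y = y 0 • Pi.single 0 1 + y 1 • Pi.single 1 1 := by
      ext i; fin_cases i <;> simp
    conv_lhs => rw [this]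
    simp only [map_add, map_smul, smul_eq_mul]
    ring
  refine ⟨f (Pi.single 0 1), f (Pi.single 1 1), trivial, fun y hy hne => ?_⟩
  rw [← key, ← key]
  exact (hf y (subset_convexHull ℝ _ ⟨hy, hne⟩)).trans hs

lemma XX_neg (a : Fin 2 → ℝ) (k : ℕ) : ∀ x, x ∈ XX (-a) k ↔ -x ∈ XX a k := by
  induction k with
  | zero => intro x; simp [XX, XSeq, neg_eq_iff_eq_neg]
  | succ k ih =>
    intro x
    rw [XX_succ, XX_succ]
    have (M : Matrix (Fin 2) (Fin 2) ℝ) :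
        x ∈ M.mulVec '' XX (-a) k ↔ -x ∈ M.mulVec '' XX a k := by
      constructor
      · rintro ⟨y, hy, rfl⟩
        exact ⟨-y, (ih y).1 hy, Matrix.mulVec_neg _ _⟩
      · rintro ⟨y, hy, h⟩
        exact ⟨-y, (ih _).2 (by simpa using hy), by rw [Matrix.mulVec_neg, h, neg_neg]⟩
    simp only [Set.mem_union, this]

lemma all_card_neg (a : Fin 2 → ℝ) (k : ℕ) :
    (Mx (XX (-a) k) (fun _ _ => True)).ncard ≤ (Mx (XX a k) (fun _ _ => True)).ncard := by
  have : Mx (XX (-a) k) (fun _ _ => True) ⊆ Neg.neg '' Mx (XX a k) (fun _ _ => True) := by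
    rintro x ⟨hx, u, v, -, h⟩
    refine ⟨-x, ⟨(XX_neg a k x).1 hx, -u, -v, trivial, fun y hy hne => ?_⟩, neg_neg x⟩
    have := h (-y) ((XX_neg a k _).2 (by simpa using hy)) (by
      intro he; apply hne; rw [← he, neg_neg])
    simp at this ⊢
    linarith
  exact (Set.ncard_le_ncard this ((Mx_finite a k _).image _)).trans
    (Set.ncard_image_le (Mx_finite a k _))

/-- `N_k(Σ₁, a) = O(k²)` for `a` on the boundary of the first or third quadrant. -/
theorem stmt8 : ∃ α : ℝ, 0 < α ∧ ∃ k₀ : ℕ, ∀ a : Fin 2 → ℝ,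
    ((0 ≤ a 0 ∧ 0 ≤ a 1 ∧ a 0 * a 1 = 0) ∨ (a 0 ≤ 0 ∧ a 1 ≤ 0 ∧ a 0 * a 1 = 0)) →
    ∀ k : ℕ, k₀ ≤ k → (NExt {M1, M2} a k : ℝ) ≤ α * (k : ℝ) ^ 2 := by
  refine ⟨10, by norm_num, 2, fun a ha k hk => ?_⟩
  obtain ⟨k, rfl⟩ := Nat.exists_eq_add_of_le' hk
  have e1 : NExt {M1, M2} a (k + 2) ≤ (Mx (XX a (k + 2)) (fun _ _ => True)).ncard :=
    Set.ncard_le_ncard (extreme_sub (XX_finite a (k + 2))) (Mx_finite a _ _)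
  have e2 : (Mx (XX a (k + 2)) (fun _ _ => True)).ncard ≤ 10 * (k + 2) ^ 2 := by
    rcases ha with ⟨h0, h1, hz⟩ | ⟨h0, h1, hz⟩
    · exact all_card h0 h1 hz k
    · have := all_card_neg (-a) (k + 2)
      rw [neg_neg] at this
      refine this.trans (all_card ?_ ?_ ?_ k) <;> simp [h0, h1, hz]
  exact_mod_cast e1.trans e2

end
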